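/- Let ρ, σ ∈ ℝ satisfy 1 − σ² > 0 and 1 − 2ρ² + σ > 0, and set ξ = 1 − 2ρ² + σ, η = (1+σ)/(1−σ), λ = 1/√(1−σ), κ = 1/√(1−2ρ²+σ), δ = 2ρ/ξ, α = √(2η)/ξ, Q(x,y) = (1−ρ²)x² − 2(σ−ρ²)xy + (1−ρ²)y². Then for all (x,y) ∈ ℝ² with (x,y) ≠ (0,0), the iterated integral (√2·λ³κ³/(2π)²) ∫_ℝ ∫_ℝ exp(−i((x+y)/2)s − i((−x+y)/2)t)·[λ²(s−iδ)² + κ²t² + α²]^{−3/2} dt ds equals (1/(2π√(1−σ²)))·exp((ρx + ρy − √η·√(Q(x,y)))/ξ), where complex powers are principal branch. -/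

import Mathlib

open MeasureTheory

noncomputable def gaussPrimitive (x : ℝ) : ℝ := ∫ z in (0 : ℝ)..x, Real.exp (-1 * z ^ 2)

lemma gaussPrimitive_hasDerivAt (x : ℝ) :
    HasDerivAt gaussPrimitive (Real.exp (-1 * x ^ 2)) x :=
  ((by fun_prop : Continuous fun z : ℝ => Real.exp (-1 * z ^ 2)).integral_hasStrictDerivAt
    0 x).hasDerivAt

lemma gaussPrimitive_neg (x : ℝ) : gaussPrimitive (-x) = -gaussPrimitive x := by
  have h := intervalIntegral.integral_comp_neg (a := 0) (b := x)
    (fun z : ℝ => Real.exp (-1 * z ^ 2))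
  simp only [neg_sq, neg_zero] at h
  rw [gaussPrimitive, gaussPrimitive, h, intervalIntegral.integral_symm]

lemma gaussPrimitive_tendsto_atTop :
    Filter.Tendsto gaussPrimitive Filter.atTop (nhds (√Real.pi / 2)) := by
  have h := intervalIntegral_tendsto_integral_Ioi (μ := volume) (0 : ℝ)
    (integrable_exp_neg_mul_sq one_pos).integrableOn Filter.tendsto_id
  rwa [integral_gaussian_Ioi, div_one] at h

lemma gaussPrimitive_tendsto_atBot :
    Filter.Tendsto gaussPrimitive Filter.atBot (nhds (-(√Real.pi / 2))) := by
  have h := (gaussPrimitive_tendsto_atTop.comp Filter.tendsto_neg_atBot_atTop).neg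
  refine h.congr fun x => ?_
  simp [gaussPrimitive_neg]

lemma integral_exp_neg_mul_add_div {a b : ℝ} (ha : 0 < a) (hb : 0 < b) :
    ∫ u in Set.Ioi (0 : ℝ), (√u)⁻¹ * Real.exp (-(a ^ 2 * u + b ^ 2 / u)) =
      √Real.pi / a * Real.exp (-(2 * a * b)) := by
  let G : ℝ → ℝ := fun u => (Real.exp (2 * a * b) * gaussPrimitive (a * √u + b / √u) +
    Real.exp (-(2 * a * b)) * gaussPrimitive (a * √u - b / √u)) / a
  let l₀ : ℝ := (Real.exp (2 * a * b) * (√Real.pi / 2) +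
    Real.exp (-(2 * a * b)) * (-(√Real.pi / 2))) / a
  let l₁ : ℝ := (Real.exp (2 * a * b) * (√Real.pi / 2) +
    Real.exp (-(2 * a * b)) * (√Real.pi / 2)) / a
  have hG : ∀ u ∈ Set.Ioi (0 : ℝ),
      HasDerivAt G ((√u)⁻¹ * Real.exp (-(a ^ 2 * u + b ^ 2 / u))) u := by
    intro u hu
    have hu : 0 < u := hu
    have hr : 0 < √u := Real.sqrt_pos.2 hu
    have hs : HasDerivAt (fun u : ℝ => √u) (1 / (2 * √u)) u := Real.hasDerivAt_sqrt hu.ne'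
    have hm := hs.const_mul a
    have hd := (hasDerivAt_const u b).div hs hr.ne'
    have h := ((((gaussPrimitive_hasDerivAt _).comp u (hm.add hd)).const_mul
      (Real.exp (2 * a * b))).add (((gaussPrimitive_hasDerivAt _).comp u (hm.sub hd)).const_mul
      (Real.exp (-(2 * a * b))))).div_const a
    refine h.congr_deriv ?_
    simp only [Pi.add_apply, Pi.sub_apply, Pi.div_apply]
    have e1 : Real.exp (-1 * (a * √u + b / √u) ^ 2) =
        Real.exp (-(2 * a * b)) * Real.exp (-(a ^ 2 * u + b ^ 2 / u)) := by
      rw [← Real.exp_add]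
      congr 1
      conv_rhs => rw [← Real.sq_sqrt hu.le]
      field_simp
      ring
    have e2 : Real.exp (-1 * (a * √u - b / √u) ^ 2) =
        Real.exp (2 * a * b) * Real.exp (-(a ^ 2 * u + b ^ 2 / u)) := by
      rw [← Real.exp_add]
      congr 1
      conv_rhs => rw [← Real.sq_sqrt hu.le]
      field_simp
      ring
    rw [e1, e2, Real.exp_neg (2 * a * b)]
    field_simp
    ring
  have hsqrt0 : Filter.Tendsto (fun u : ℝ => √u) (nhdsWithin 0 (Set.Ioi 0))
      (nhdsWithin 0 (Set.Ioi 0)) := by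
    refine tendsto_nhdsWithin_iff.2 ⟨?_, ?_⟩
    · have := (Real.continuous_sqrt.tendsto 0)
      rw [Real.sqrt_zero] at this
      exact this.mono_left nhdsWithin_le_nhds
    · filter_upwards [self_mem_nhdsWithin] with u hu using Real.sqrt_pos.2 hu
  have hm0 : Filter.Tendsto (fun u : ℝ => a * √u) (nhdsWithin 0 (Set.Ioi 0)) (nhds 0) := by
    simpa using (hsqrt0.mono_right nhdsWithin_le_nhds).const_mul a
  have hd0 : Filter.Tendsto (fun u : ℝ => b / √u) (nhdsWithin 0 (Set.Ioi 0)) Filter.atTop := by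
    simp only [div_eq_mul_inv]
    exact (tendsto_inv_nhdsGT_zero.comp hsqrt0).const_mul_atTop hb
  have hm1 : Filter.Tendsto (fun u : ℝ => a * √u) Filter.atTop Filter.atTop :=
    Real.tendsto_sqrt_atTop.const_mul_atTop ha
  have hd1 : Filter.Tendsto (fun u : ℝ => b / √u) Filter.atTop (nhds 0) :=
    Real.tendsto_sqrt_atTop.const_div_atTop b
  have hG0 : Filter.Tendsto G (nhdsWithin 0 (Set.Ioi 0)) (nhds l₀) := by
    refine (((gaussPrimitive_tendsto_atTop.comp (hm0.add_atTop hd0)).const_mul _).add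
      ((gaussPrimitive_tendsto_atBot.comp ?_).const_mul _)).div_const a
    simp only [sub_eq_add_neg]
    exact hm0.add_atBot (Filter.tendsto_neg_atTop_atBot.comp hd0)
  have hG1 : Filter.Tendsto G Filter.atTop (nhds l₁) := by
    refine (((gaussPrimitive_tendsto_atTop.comp (hm1.atTop_add hd1)).const_mul _).add
      ((gaussPrimitive_tendsto_atTop.comp ?_).const_mul _)).div_const a
    simp only [sub_eq_add_neg]
    exact hm1.atTop_add hd1.neg
  have h := integral_Ioi_of_hasDerivAt_of_nonneg (g := Function.update G 0 l₀) (a := 0) (l := l₁)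
    (g' := fun u => (√u)⁻¹ * Real.exp (-(a ^ 2 * u + b ^ 2 / u))) ?_ ?_ ?_ ?_
  · rw [h, Function.update_self]
    simp only [l₀, l₁]
    ring
  · rw [continuousWithinAt_update_same]
    simpa using hG0
  · intro u hu
    refine (hG u hu).congr_of_eventuallyEq ?_
    filter_upwards [Ioi_mem_nhds hu] with v hv
    exact Function.update_of_ne (ne_of_gt hv) _ _
  · intro u _
    positivity
  · refine hG1.congr' ?_
    filter_upwards [Filter.eventually_gt_atTop (0 : ℝ)] with v hv
    exact (Function.update_of_ne (ne_of_gt hv) _ _).symm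

lemma hasDerivAt_mul_cexp_neg_mul_sq (w : ℂ) (x : ℝ) :
    HasDerivAt (fun x : ℝ => (x : ℂ) * Complex.exp (-w * (x : ℂ) ^ 2))
      (Complex.exp (-w * (x : ℂ) ^ 2) - 2 * w * ((x : ℂ) ^ 2 * Complex.exp (-w * (x : ℂ) ^ 2)))
      x := by
  have h := (hasDerivAt_id (x : ℂ)).mul
    ((((hasDerivAt_id (x : ℂ)).pow 2).const_mul (-w)).cexp)
  refine h.comp_ofReal.congr_deriv ?_
  simp
  ring

lemma integrable_sq_mul_cexp_neg_mul_sq {w : ℂ} (hw : 0 < w.re) :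
    Integrable fun x : ℝ => (x : ℂ) ^ 2 * Complex.exp (-w * (x : ℂ) ^ 2) := by
  have h := integrable_rpow_mul_exp_neg_mul_sq hw (s := 2) (by norm_num)
  refine h.mono' (by fun_prop) (Filter.Eventually.of_forall fun x => le_of_eq ?_)
  rw [norm_mul, Complex.norm_exp, norm_pow, Complex.norm_real, Real.norm_eq_abs, sq_abs,
    ← Complex.ofReal_pow, Complex.re_mul_ofReal, Complex.neg_re, Real.rpow_two]

lemma integral_sq_mul_cexp_neg_mul_sq_Ioi {w : ℂ} (hw : 0 < w.re) :
    ∫ x in Set.Ioi (0 : ℝ), (x : ℂ) ^ 2 * Complex.exp (-w * (x : ℂ) ^ 2) =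
      (Real.pi / w) ^ (1 / 2 : ℂ) / (4 * w) := by
  have hw0 : w ≠ 0 := by rintro rfl; simp at hw
  have hi := (integrable_cexp_neg_mul_sq hw).integrableOn (s := Set.Ioi 0)
  have hi2 := (integrable_sq_mul_cexp_neg_mul_sq hw).integrableOn (s := Set.Ioi 0)
  have hf' := hi.sub (hi2.const_mul (2 * w))
  have h := integral_Ioi_of_hasDerivAt_of_tendsto' (a := 0)
    (fun x _ => hasDerivAt_mul_cexp_neg_mul_sq w x) hf'
    (tendsto_zero_of_hasDerivAt_of_integrableOn_Ioi
      (fun x _ => hasDerivAt_mul_cexp_neg_mul_sq w x) hf'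
      (integrable_mul_cexp_neg_mul_sq hw).integrableOn)
  rw [integral_sub hi (hi2.const_mul (2 * w)), integral_const_mul,
    integral_gaussian_complex_Ioi hw] at h
  simp only [Complex.ofReal_zero, zero_mul, sub_zero] at h
  rw [eq_div_iff (by simp [hw0])]
  linear_combination (-2) * h

lemma integral_sqrt_mul_cexp_neg_mul_Ioi {w : ℂ} (hw : 0 < w.re) :
    ∫ u in Set.Ioi (0 : ℝ), ((√u : ℝ) : ℂ) * Complex.exp (-w * u) =
      (√Real.pi / 2 : ℝ) * w ^ (-(3 : ℂ) / 2) := by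
  have hw0 : w ≠ 0 := by rintro rfl; simp at hw
  rw [← integral_comp_rpow_Ioi_of_pos (p := 2) two_pos]
  have h : ∀ x ∈ Set.Ioi (0 : ℝ), ((2 : ℝ) * x ^ ((2 : ℝ) - 1)) •
      (((√(x ^ (2 : ℝ)) : ℝ) : ℂ) * Complex.exp (-w * (x ^ (2 : ℝ) : ℝ))) =
      2 * ((x : ℂ) ^ 2 * Complex.exp (-w * (x : ℂ) ^ 2)) := by
    intro x hx
    have hx : 0 < x := hx
    rw [show (2 : ℝ) - 1 = 1 by norm_num, Real.rpow_one, Real.rpow_two, Real.sqrt_sq hx.le,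
      Complex.real_smul]
    push_cast
    ring
  rw [setIntegral_congr_fun measurableSet_Ioi h, integral_const_mul,
    integral_sq_mul_cexp_neg_mul_sq_Ioi hw]
  have harg : w.arg ≠ Real.pi := fun h => by
    have := (Complex.arg_eq_pi_iff.1 h).1
    linarith
  have h1 : (Real.pi / w : ℂ) ^ (1 / 2 : ℂ) = √Real.pi * w ^ (-(1 / 2) : ℂ) := by
    have hpi : (Real.pi : ℂ) ≠ 0 := Complex.ofReal_ne_zero.2 Real.pi_ne_zero
    rw [div_eq_mul_inv, Complex.cpow_neg, ← Complex.inv_cpow _ _ harg, Real.sqrt_eq_rpow,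
      Complex.ofReal_cpow Real.pi_pos.le, Complex.cpow_def_of_ne_zero (by simp [hw0]),
      Complex.cpow_def_of_ne_zero hpi, Complex.cpow_def_of_ne_zero (inv_ne_zero hw0),
      Complex.log_ofReal_mul Real.pi_pos (inv_ne_zero hw0), Complex.ofReal_log Real.pi_pos.le,
      add_mul, Complex.exp_add]
    norm_num
  rw [h1, show (-(3 : ℂ) / 2) = -(1 / 2) + -1 by norm_num, Complex.cpow_add _ _ hw0,
    Complex.cpow_neg_one]
  push_cast
  field_simp
  ring

lemma integral_cexp_neg_mul_sq_add {m : ℝ} (hm : 0 < m) (c e : ℂ) :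
    ∫ x : ℝ, Complex.exp (-(m : ℂ) * (x : ℂ) ^ 2 + c * x + e) =
      (√(Real.pi / m) : ℝ) * Complex.exp (e + c ^ 2 / (4 * m)) := by
  rw [integral_cexp_quadratic (by simpa using hm), Real.sqrt_eq_rpow,
    Complex.ofReal_cpow (by positivity)]
  congr 2
  · push_cast; ring
  · norm_num
  · rw [mul_neg, div_neg]; ring

lemma integrable_cexp_neg_mul_sq_add {m : ℝ} (hm : 0 < m) (c e : ℂ) :
    Integrable fun x : ℝ => Complex.exp (-(m : ℂ) * (x : ℂ) ^ 2 + c * x + e) :=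
  integrable_cexp_quadratic' (by simpa using hm) c e

lemma integral_norm_cexp_neg_mul_sq_add (m : ℝ) {c e : ℂ} (hc : c.re = 0) :
    ∫ x : ℝ, ‖Complex.exp (-(m : ℂ) * (x : ℂ) ^ 2 + c * x + e)‖ =
      √(Real.pi / m) * Real.exp e.re := by
  rw [← integral_gaussian, ← integral_mul_const]
  congr 1 with x
  rw [Complex.norm_exp, ← Real.exp_add, Complex.add_re, Complex.add_re, Complex.re_mul_ofReal, hc,
    ← Complex.ofReal_neg, ← Complex.ofReal_pow, ← Complex.ofReal_mul, Complex.ofReal_re]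
  congr 1
  ring

lemma sqrt_pi_div_mul_sqrt_pi_div {p q u : ℝ} (hp : 0 < p) (hq : 0 < q) (hu : 0 < u) :
    √(Real.pi / (u * p)) * √(Real.pi / (u * q)) = Real.pi / √(p * q) * u⁻¹ := by
  rw [← Real.sqrt_mul (by positivity),
    show Real.pi / (u * p) * (Real.pi / (u * q)) = (Real.pi * u⁻¹) ^ 2 / (p * q) by field_simp,
    Real.sqrt_div (by positivity), Real.sqrt_sq (by positivity)]
  ring

section Kernel

variable (p q A d a b : ℝ)

noncomputable def firstGaussian (u s : ℝ) : ℂ :=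
  Complex.exp (-((u * p : ℝ) : ℂ) * (s : ℂ) ^ 2 +
    Complex.I * ((2 * u * p * d - a : ℝ) : ℂ) * s + ((u * p * d ^ 2 - u * A : ℝ) : ℂ))

noncomputable def secondGaussian (u t : ℝ) : ℂ :=
  Complex.exp (-((u * q : ℝ) : ℂ) * (t : ℂ) ^ 2 + Complex.I * ((-b : ℝ) : ℂ) * t + 0)

noncomputable def gaussianKernel (z : (ℝ × ℝ) × ℝ) : ℂ :=
  ((√z.2 : ℝ) : ℂ) * (firstGaussian p A d a z.2 z.1.1 * secondGaussian q b z.2 z.1.2)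

variable {p q A}

lemma integrable_firstGaussian_mul_secondGaussian (hp : 0 < p) (hq : 0 < q) {u : ℝ} (hu : 0 < u) :
    Integrable fun z : ℝ × ℝ => firstGaussian p A d a u z.1 * secondGaussian q b u z.2 :=
  (integrable_cexp_neg_mul_sq_add (mul_pos hu hp) _ _).mul_prod
    (integrable_cexp_neg_mul_sq_add (mul_pos hu hq) _ _)

lemma integral_firstGaussian_mul_secondGaussian (hp : 0 < p) (hq : 0 < q) {u : ℝ} (hu : 0 < u) :
    ∫ z : ℝ × ℝ, firstGaussian p A d a u z.1 * secondGaussian q b u z.2 =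
      ((Real.pi / √(p * q) * Real.exp (a * d) * (u⁻¹ *
        Real.exp (-(A * u + (a ^ 2 / p + b ^ 2 / q) / 4 / u))) : ℝ) : ℂ) := by
  rw [Measure.volume_eq_prod, integral_prod_mul]
  simp only [firstGaussian, secondGaussian]
  rw [integral_cexp_neg_mul_sq_add (mul_pos hu hp), integral_cexp_neg_mul_sq_add (mul_pos hu hq)]
  rw [mul_mul_mul_comm, ← Complex.exp_add, ← Complex.ofReal_mul,
    sqrt_pi_div_mul_sqrt_pi_div hp hq hu, mul_pow, mul_pow, Complex.I_sq,
    neg_one_mul, neg_one_mul]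
  have h2 : ((u * p * d ^ 2 - u * A : ℝ) : ℂ) +
      -((2 * u * p * d - a : ℝ) : ℂ) ^ 2 / (4 * ((u * p : ℝ) : ℂ)) +
      (0 + -((-b : ℝ) : ℂ) ^ 2 / (4 * ((u * q : ℝ) : ℂ))) =
      ((a * d + -(A * u + (a ^ 2 / p + b ^ 2 / q) / 4 / u) : ℝ) : ℂ) := by
    norm_cast
    field_simp
    ring
  rw [h2, ← Complex.ofReal_exp, ← Complex.ofReal_mul, Real.exp_add]
  congr 1
  ring

lemma integrable_gaussianKernel (hp : 0 < p) (hq : 0 < q) (hA : p * d ^ 2 < A) :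
    Integrable (gaussianKernel p q A d a b)
      ((volume : Measure (ℝ × ℝ)).prod (volume.restrict (Set.Ioi 0))) := by
  have hcont : Continuous (gaussianKernel p q A d a b) := by
    unfold gaussianKernel firstGaussian secondGaussian
    fun_prop
  refine (integrable_prod_iff' hcont.aestronglyMeasurable).2 ⟨?_, ?_⟩
  · filter_upwards [ae_restrict_mem measurableSet_Ioi] with u hu
    simp only [gaussianKernel]
    exact (integrable_firstGaussian_mul_secondGaussian d a b hp hq hu).const_mul _
  · have hi := (integrableOn_rpow_mul_exp_neg_mul_rpow (s := -(1 / 2)) (p := 1) (b := A - p * d ^ 2)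
      (by norm_num) one_pos (by linarith)).const_mul (Real.pi / √(p * q))
    refine hi.congr ?_
    filter_upwards [ae_restrict_mem measurableSet_Ioi] with u hu
    have hu : 0 < u := hu
    simp only [gaussianKernel, norm_mul]
    rw [integral_const_mul, Measure.volume_eq_prod,
      integral_prod_mul (fun s => ‖firstGaussian p A d a u s‖) (fun t => ‖secondGaussian q b u t‖)]
    simp only [firstGaussian, secondGaussian]
    rw [integral_norm_cexp_neg_mul_sq_add _ (by simp),
      integral_norm_cexp_neg_mul_sq_add _ (by simp)]
    rw [mul_mul_mul_comm, sqrt_pi_div_mul_sqrt_pi_div hp hq hu, Complex.ofReal_re,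
      Complex.zero_re, Real.exp_zero, mul_one,
      Complex.norm_real, Real.norm_of_nonneg (Real.sqrt_nonneg u), Real.rpow_one,
      Real.rpow_neg hu.le, ← Real.sqrt_eq_rpow]
    have h2 : u⁻¹ = (√u)⁻¹ * (√u)⁻¹ := by rw [← mul_inv, Real.mul_self_sqrt hu.le]
    rw [h2, show -(A - p * d ^ 2) * u = u * p * d ^ 2 - u * A by ring]
    have h3 : √u ≠ 0 := (Real.sqrt_pos.2 hu).ne'
    field_simp

lemma integral_gaussianKernel_right (hp : 0 < p) (hq : 0 < q) (hA : p * d ^ 2 < A) (s t : ℝ) :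
    ∫ u in Set.Ioi (0 : ℝ), gaussianKernel p q A d a b ((s, t), u) =
      (√Real.pi / 2 : ℝ) * (Complex.exp (-Complex.I * a * s - Complex.I * b * t) *
        (p * (s - Complex.I * d) ^ 2 + q * (t : ℂ) ^ 2 + A) ^ (-(3 : ℂ) / 2)) := by
  have hre : 0 < ((p : ℂ) * (s - Complex.I * d) ^ 2 + q * (t : ℂ) ^ 2 + A).re := by
    have : ((p : ℂ) * (s - Complex.I * d) ^ 2 + q * (t : ℂ) ^ 2 + A).re =
        p * (s ^ 2 - d ^ 2) + q * t ^ 2 + A := by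
      simp [sq]
    rw [this]
    nlinarith [mul_nonneg hp.le (sq_nonneg s), mul_nonneg hq.le (sq_nonneg t)]
  rw [mul_left_comm, ← integral_sqrt_mul_cexp_neg_mul_Ioi hre, ← integral_const_mul]
  congr 1 with u
  rw [gaussianKernel, firstGaussian, secondGaussian, ← Complex.exp_add, mul_left_comm,
    ← Complex.exp_add]
  congr 2
  push_cast
  linear_combination ((u : ℂ) * p * d ^ 2) * Complex.I_sq

lemma integral_integral_cexp_mul_cpow (hp : 0 < p) (hq : 0 < q) (hA : p * d ^ 2 < A) :
    ((√Real.pi / 2 : ℝ) : ℂ) *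
      ∫ s : ℝ, ∫ t : ℝ, Complex.exp (-Complex.I * a * s - Complex.I * b * t) *
        (p * (s - Complex.I * d) ^ 2 + q * (t : ℂ) ^ 2 + A) ^ (-(3 : ℂ) / 2) =
      ((Real.pi / √(p * q) * Real.exp (a * d) * ∫ u in Set.Ioi (0 : ℝ), (√u)⁻¹ *
        Real.exp (-(A * u + (a ^ 2 / p + b ^ 2 / q) / 4 / u)) : ℝ) : ℂ) := by
  have hK := integrable_gaussianKernel d a b hp hq hA
  have hK2 := hK.integral_prod_left
  rw [← integral_const_mul]
  simp_rw [← integral_const_mul, ← integral_gaussianKernel_right d a b hp hq hA]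
  rw [← integral_prod (fun z : ℝ × ℝ => ∫ u in Set.Ioi (0 : ℝ), gaussianKernel p q A d a b (z, u))
    hK2, ← Measure.volume_eq_prod,
    integral_integral_swap (f := fun z u => gaussianKernel p q A d a b (z, u)) hK,
    ← integral_complex_ofReal]
  refine setIntegral_congr_fun measurableSet_Ioi fun u hu => ?_
  have hu : 0 < u := hu
  simp only [gaussianKernel]
  rw [integral_const_mul, integral_firstGaussian_mul_secondGaussian d a b hp hq hu,
    ← Complex.ofReal_mul]
  congr 1
  have h2 : u⁻¹ = (√u)⁻¹ * (√u)⁻¹ := by rw [← mul_inv, Real.mul_self_sqrt hu.le]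
  have h3 : √u ≠ 0 := (Real.sqrt_pos.2 hu).ne'
  rw [h2]
  field_simp

end Kernel

lemma integral_integral_cexp_mul_cpow_eq {p q A d a b : ℝ} (hp : 0 < p) (hq : 0 < q)
    (hA : 0 < A) (hd : p * d ^ 2 < A ^ 2) (hab : 0 < a ^ 2 / p + b ^ 2 / q) :
    ∫ s : ℝ, ∫ t : ℝ, Complex.exp (-Complex.I * a * s - Complex.I * b * t) *
        (p * (s - Complex.I * d) ^ 2 + q * (t : ℂ) ^ 2 + (A : ℂ) ^ 2) ^ (-(3 : ℂ) / 2) =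
      ((2 * Real.pi / (√(p * q) * A) *
        Real.exp (a * d - A * √(a ^ 2 / p + b ^ 2 / q)) : ℝ) : ℂ) := by
  have hB : 0 < √(a ^ 2 / p + b ^ 2 / q) / 2 := by positivity
  have hB2 : (√(a ^ 2 / p + b ^ 2 / q) / 2) ^ 2 = (a ^ 2 / p + b ^ 2 / q) / 4 := by
    rw [div_pow, Real.sq_sqrt hab.le]
    norm_num
  have h := integral_integral_cexp_mul_cpow d a b hp hq hd
  rw [← hB2, integral_exp_neg_mul_add_div hA hB] at h
  have hpi : ((√Real.pi / 2 : ℝ) : ℂ) ≠ 0 := Complex.ofReal_ne_zero.2 (by positivity)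
  rw [← mul_right_inj' hpi, ← Complex.ofReal_mul, ← Complex.ofReal_pow, h]
  congr 1
  rw [sub_eq_add_neg, Real.exp_add,
    show 2 * A * (√(a ^ 2 / p + b ^ 2 / q) / 2) = A * √(a ^ 2 / p + b ^ 2 / q) by ring]
  field_simp


theorem joint_density_n_three (ρ σ : ℝ) (h1 : 1 - σ ^ 2 > 0) (h2 : 1 - 2 * ρ ^ 2 + σ > 0)
    (ξ η lam kap δ α : ℝ) (hξ : ξ = 1 - 2 * ρ ^ 2 + σ) (hη : η = (1 + σ) / (1 - σ))
    (hlam : lam = 1 / Real.sqrt (1 - σ)) (hkap : kap = 1 / Real.sqrt (1 - 2 * ρ ^ 2 + σ))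
    (hδ : δ = 2 * ρ / ξ) (hα : α = Real.sqrt (2 * η) / ξ) :
    ∀ x y : ℝ, (x, y) ≠ (0, 0) →
      ((Real.sqrt 2 * lam ^ 3 * kap ^ 3 / (2 * Real.pi) ^ 2 : ℝ) : ℂ) *
        (∫ s : ℝ, ∫ t : ℝ,
          Complex.exp (-Complex.I * (((x : ℂ) + y) / 2) * s -
              Complex.I * ((-(x : ℂ) + y) / 2) * t) *
            ((lam : ℂ) ^ 2 * ((s : ℂ) - Complex.I * δ) ^ 2 + (kap : ℂ) ^ 2 * (t : ℂ) ^ 2 +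
              (α : ℂ) ^ 2) ^ (-(3 : ℂ) / 2)) =
      ((1 / (2 * Real.pi * Real.sqrt (1 - σ ^ 2)) *
          Real.exp ((ρ * x + ρ * y - Real.sqrt η *
            Real.sqrt ((1 - ρ ^ 2) * x ^ 2 - 2 * (σ - ρ ^ 2) * x * y +
              (1 - ρ ^ 2) * y ^ 2)) / ξ) : ℝ) : ℂ) := by
  intro x y hxy
  have hσ : 0 < 1 - σ := by nlinarith
  have hσ' : 0 < 1 + σ := by nlinarith
  rw [← hξ] at h2 hkap
  have hξ0 : 0 < ξ := h2
  have hη0 : 0 < η := hη ▸ div_pos hσ' hσ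
  have hlam0 : 0 < lam := hlam ▸ by positivity
  have hkap0 : 0 < kap := hkap ▸ by positivity
  have hα0 : 0 < α := hα ▸ by positivity
  have hlam2 : lam ^ 2 = 1 / (1 - σ) := by rw [hlam, div_pow, Real.sq_sqrt hσ.le, one_pow]
  have hkap2 : kap ^ 2 = 1 / ξ := by rw [hkap, div_pow, Real.sq_sqrt hξ0.le, one_pow]
  have hα2 : α ^ 2 = 2 * η / ξ ^ 2 := by rw [hα, div_pow, Real.sq_sqrt (by positivity)]
  have hdecay : lam ^ 2 * δ ^ 2 < α ^ 2 := by
    have h : α ^ 2 - lam ^ 2 * δ ^ 2 = 2 / ((1 - σ) * ξ) := by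
      rw [hα2, hlam2, hδ, hη]
      field_simp
      rw [hξ]
      ring
    have : 0 < 2 / ((1 - σ) * ξ) := by positivity
    linarith
  have hquad : ((x + y) / 2) ^ 2 / lam ^ 2 + ((-x + y) / 2) ^ 2 / kap ^ 2 =
      ((1 - ρ ^ 2) * x ^ 2 - 2 * (σ - ρ ^ 2) * x * y + (1 - ρ ^ 2) * y ^ 2) / 2 := by
    rw [hlam2, hkap2, hξ]
    field_simp
    ring
  have hquad0 : 0 < ((x + y) / 2) ^ 2 / lam ^ 2 + ((-x + y) / 2) ^ 2 / kap ^ 2 := by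
    by_cases hs : x + y = 0
    · have hd : -x + y ≠ 0 := fun hd => hxy (by
        rw [Prod.mk.injEq]
        constructor <;> linarith)
      positivity
    · positivity
  have h := integral_integral_cexp_mul_cpow_eq (pow_pos hlam0 2) (pow_pos hkap0 2) hα0 hdecay hquad0
  have hexp : (x + y) / 2 * δ -
      α * √(((x + y) / 2) ^ 2 / lam ^ 2 + ((-x + y) / 2) ^ 2 / kap ^ 2) =
      (ρ * x + ρ * y - √η * √((1 - ρ ^ 2) * x ^ 2 - 2 * (σ - ρ ^ 2) * x * y +
        (1 - ρ ^ 2) * y ^ 2)) / ξ := by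
    rw [hquad, Real.sqrt_div' _ two_pos.le, hδ, hα, Real.sqrt_mul two_pos.le]
    field_simp
  have hcoef : √2 * lam ^ 3 * kap ^ 3 / (2 * Real.pi) ^ 2 *
      (2 * Real.pi / (√(lam ^ 2 * kap ^ 2) * α)) = 1 / (2 * Real.pi * √(1 - σ ^ 2)) := by
    have hfac : √(1 - σ ^ 2) = √(1 - σ) * √(1 + σ) := by
      rw [← Real.sqrt_mul hσ.le]
      congr 1
      ring
    have hr : √(1 - σ) ^ 2 = 1 - σ := Real.sq_sqrt hσ.le
    rw [← mul_pow, Real.sqrt_sq (by positivity)]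
    calc _ = √2 * lam ^ 2 * kap ^ 2 / (2 * Real.pi * α) := by field_simp
      _ = _ := by
        rw [hlam2, hkap2, hα, hη, hfac, Real.sqrt_mul two_pos.le, Real.sqrt_div hσ'.le, ← hr,
          Real.sqrt_sq (Real.sqrt_nonneg _)]
        field_simp
  rw [← hexp, ← hcoef, mul_assoc (√2 * lam ^ 3 * kap ^ 3 / (2 * Real.pi) ^ 2),
    Complex.ofReal_mul, ← h]
  push_cast
  rfl
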